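/- Let a₀, …, a₇ be the vertices of the unit cube [0,1]³ ⊂ ℝ³ (a_k has coordinates the binary digits of k) and let b = (1/2, 1/2, 1/2) be the center of the cube. Then the ten tetrahedra conv{a₀,a₁,a₂,a₄}, conv{a₃,a₅,a₆,a₇}, conv{b,a₁,a₂,a₄}, conv{b,a₁,a₄,a₅}, conv{b,a₁,a₃,a₅}, conv{b,a₃,a₅,a₆}, conv{b,a₂,a₃,a₆}, conv{b,a₂,a₄,a₆}, conv{b,a₄,a₅,a₆}, conv{b,a₁,a₂,a₃} each have affinely independent vertex sets, their union is [0,1]³, and they have pairwise disjoint interiors. (This is the 'type B₀' triangulation of the cube: the two corner tetrahedra at a₀ and a₇ are removed and the remaining polytope, which has eight triangular boundary faces, is coned from the center b.) -/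

import Mathlib

noncomputable section

/-- The point `(a, b, c)` of Euclidean 3-space. -/
def pt3 (a b c : ℝ) : EuclideanSpace ℝ (Fin 3) :=
  (WithLp.equiv 2 (Fin 3 → ℝ)).symm ![a, b, c]

/-- The unit cube `[0,1]³` in Euclidean 3-space. -/
def unitCube : Set (EuclideanSpace ℝ (Fin 3)) :=
  {x | ∀ i : Fin 3, x i ∈ Set.Icc (0 : ℝ) 1}

/-- The vertices `a₀, …, a₇` of the unit cube (`a_k` has coordinates the binary digits
of `k`). -/
def a₀ : EuclideanSpace ℝ (Fin 3) := pt3 0 0 0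
def a₁ : EuclideanSpace ℝ (Fin 3) := pt3 1 0 0
def a₂ : EuclideanSpace ℝ (Fin 3) := pt3 0 1 0
def a₃ : EuclideanSpace ℝ (Fin 3) := pt3 1 1 0
def a₄ : EuclideanSpace ℝ (Fin 3) := pt3 0 0 1
def a₅ : EuclideanSpace ℝ (Fin 3) := pt3 1 0 1
def a₆ : EuclideanSpace ℝ (Fin 3) := pt3 0 1 1
def a₇ : EuclideanSpace ℝ (Fin 3) := pt3 1 1 1

/-- The center `b = (1/2, 1/2, 1/2)` of the unit cube. -/
def bCtr : EuclideanSpace ℝ (Fin 3) := pt3 (1/2) (1/2) (1/2)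

/-- The tetrahedron `conv{p, q, r, s}`. -/
def tet (p q r s : EuclideanSpace ℝ (Fin 3)) : Set (EuclideanSpace ℝ (Fin 3)) :=
  convexHull ℝ {p, q, r, s}

/-- The 'type B₀' family of ten tetrahedra: the two corner tetrahedra at `a₀` and `a₇`
together with the cone from the center `b` over the eight triangular boundary faces of the
remaining polytope. -/
def typeB₀ : Fin 10 → Set (EuclideanSpace ℝ (Fin 3)) :=
  ![tet a₀ a₁ a₂ a₄, tet a₃ a₅ a₆ a₇,
    tet bCtr a₁ a₂ a₄, tet bCtr a₁ a₄ a₅, tet bCtr a₁ a₃ a₅, tet bCtr a₃ a₅ a₆,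
    tet bCtr a₂ a₃ a₆, tet bCtr a₂ a₄ a₆, tet bCtr a₄ a₅ a₆, tet bCtr a₁ a₂ a₃]

end

theorem mem_tet_pt (x : EuclideanSpace ℝ (Fin 3)) (p q r s : EuclideanSpace ℝ (Fin 3)) :
    x ∈ tet p q r s ↔ ∃ a b c d : ℝ, 0 ≤ a ∧ 0 ≤ b ∧ 0 ≤ c ∧ 0 ≤ d ∧ a + b + c + d = 1 ∧
      ∀ i, x i = a * p i + b * q i + c * r i + d * s i := by
  constructor
  · intro h
    have hc : Convex ℝ {y : EuclideanSpace ℝ (Fin 3) | ∃ a b c d : ℝ,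
        0 ≤ a ∧ 0 ≤ b ∧ 0 ≤ c ∧ 0 ≤ d ∧ a + b + c + d = 1 ∧
        ∀ i, y i = a * p i + b * q i + c * r i + d * s i} := by
      rintro y ⟨a, b, c, d, ha, hb, hc, hd, hs, hy⟩ z ⟨a', b', c', d', ha', hb', hc', hd', hs', hz⟩
        u v hu hv huv
      refine ⟨u * a + v * a', u * b + v * b', u * c + v * c', u * d + v * d',
        by positivity, by positivity, by positivity, by positivity, ?_, ?_⟩
      · linear_combination u * hs + v * hs' + huv
      · intro i
        simp only [PiLp.add_apply, PiLp.smul_apply, smul_eq_mul, hy, hz]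
        ring
    refine convexHull_min ?_ hc h
    rintro y (rfl | rfl | rfl | rfl)
    · exact ⟨1, 0, 0, 0, by norm_num, by norm_num, by norm_num, by norm_num, by norm_num, by simp⟩
    · exact ⟨0, 1, 0, 0, by norm_num, by norm_num, by norm_num, by norm_num, by norm_num, by simp⟩
    · exact ⟨0, 0, 1, 0, by norm_num, by norm_num, by norm_num, by norm_num, by norm_num, by simp⟩
    · exact ⟨0, 0, 0, 1, by norm_num, by norm_num, by norm_num, by norm_num, by norm_num, by simp⟩
  · rintro ⟨a, b, c, d, ha, hb, hc, hd, hs, hx⟩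
    have hC : Convex ℝ (tet p q r s) := convex_convexHull ℝ _
    have hp : ∀ y ∈ ({p, q, r, s} : Set (EuclideanSpace ℝ (Fin 3))), y ∈ tet p q r s :=
      fun y hy => subset_convexHull ℝ _ hy
    have := hC.sum_mem (t := Finset.univ) (w := ![a, b, c, d]) (z := ![p, q, r, s])
      (by intro i _; fin_cases i <;> simpa) (by simpa [Fin.sum_univ_four] using hs)
      (by intro i _; apply hp; fin_cases i <;> simp)
    convert this using 1
    ext i
    simp [Fin.sum_univ_four, hx]

theorem affInd_of (p q r s : EuclideanSpace ℝ (Fin 3))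
    (h : ∀ a b c d : ℝ, a + b + c + d = 0 →
      (∀ i, a * p i + b * q i + c * r i + d * s i = 0) → a = 0 ∧ b = 0 ∧ c = 0 ∧ d = 0) :
    AffineIndependent ℝ ![p, q, r, s] := by
  rw [affineIndependent_iff_of_fintype]
  intro w hw hv
  rw [Finset.weightedVSub_eq_linear_combination _ hw] at hv
  obtain ⟨h0, h1, h2, h3⟩ := h (w 0) (w 1) (w 2) (w 3)
    (by simpa [Fin.sum_univ_four] using hw)
    (by
      intro i
      have := congrArg (fun y : EuclideanSpace ℝ (Fin 3) => y i) hv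
      simpa [Fin.sum_univ_four] using this)
  intro i
  fin_cases i <;> assumption

theorem strict_of_interior {S : Set (EuclideanSpace ℝ (Fin 3))} (a b c d : ℝ)
    (hS : ∀ y ∈ S, 0 ≤ a * y 0 + b * y 1 + c * y 2 + d) (hn : 0 < a * a + b * b + c * c)
    {x : EuclideanSpace ℝ (Fin 3)} (hx : x ∈ interior S) :
    0 < a * x 0 + b * x 1 + c * x 2 + d := by
  have hcont : Continuous (fun t : ℝ => x - t • pt3 a b c) := by fun_prop
  have hU : (fun t : ℝ => x - t • pt3 a b c) ⁻¹' (interior S) ∈ nhds (0 : ℝ) :=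
    (isOpen_interior.preimage hcont).mem_nhds (by simpa using hx)
  obtain ⟨ε, hε, hb⟩ := Metric.mem_nhds_iff.1 hU
  have hm := hb (show ε / 2 ∈ Metric.ball (0 : ℝ) ε by
    rw [Metric.mem_ball, Real.dist_eq, sub_zero, abs_of_pos (by positivity)]; linarith)
  have h := hS _ (interior_subset hm)
  simp [pt3] at h
  nlinarith [mul_pos hε hn]

theorem memT0 (x : EuclideanSpace ℝ (Fin 3)) : x ∈ tet a₀ a₁ a₂ a₄ ↔
    0 ≤ (-1) * x 0 + (-1) * x 1 + (-1) * x 2 + (1) ∧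
    0 ≤ (1) * x 0 + (0) * x 1 + (0) * x 2 + (0) ∧
    0 ≤ (0) * x 0 + (1) * x 1 + (0) * x 2 + (0) ∧
    0 ≤ (0) * x 0 + (0) * x 1 + (1) * x 2 + (0) := by
  rw [mem_tet_pt]
  constructor
  · rintro ⟨a, b, c, d, ha, hb, hc, hd, hs, hx⟩
    have h0 := hx 0
    have h1 := hx 1
    have h2 := hx 2
    simp [pt3, a₀, a₁, a₂, a₄] at h0 h1 h2
    refine ⟨?_, ?_, ?_, ?_⟩ <;> linarith
  · rintro ⟨h0, h1, h2, h3⟩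
    refine ⟨_, _, _, _, h0, h1, h2, h3, by ring, ?_⟩
    intro i
    fin_cases i <;> simp [pt3, a₀, a₁, a₂, a₄] <;> ring

theorem memT1 (x : EuclideanSpace ℝ (Fin 3)) : x ∈ tet a₃ a₅ a₆ a₇ ↔
    0 ≤ (0) * x 0 + (0) * x 1 + (-1) * x 2 + (1) ∧
    0 ≤ (0) * x 0 + (-1) * x 1 + (0) * x 2 + (1) ∧
    0 ≤ (-1) * x 0 + (0) * x 1 + (0) * x 2 + (1) ∧
    0 ≤ (1) * x 0 + (1) * x 1 + (1) * x 2 + (-2) := by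
  rw [mem_tet_pt]
  constructor
  · rintro ⟨a, b, c, d, ha, hb, hc, hd, hs, hx⟩
    have h0 := hx 0
    have h1 := hx 1
    have h2 := hx 2
    simp [pt3, a₃, a₅, a₆, a₇] at h0 h1 h2
    refine ⟨?_, ?_, ?_, ?_⟩ <;> linarith
  · rintro ⟨h0, h1, h2, h3⟩
    refine ⟨_, _, _, _, h0, h1, h2, h3, by ring, ?_⟩
    intro i
    fin_cases i <;> simp [pt3, a₃, a₅, a₆, a₇] <;> ring

theorem memT2 (x : EuclideanSpace ℝ (Fin 3)) : x ∈ tet bCtr a₁ a₂ a₄ ↔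
    0 ≤ (2) * x 0 + (2) * x 1 + (2) * x 2 + (-2) ∧
    0 ≤ (0) * x 0 + (-1) * x 1 + (-1) * x 2 + (1) ∧
    0 ≤ (-1) * x 0 + (0) * x 1 + (-1) * x 2 + (1) ∧
    0 ≤ (-1) * x 0 + (-1) * x 1 + (0) * x 2 + (1) := by
  rw [mem_tet_pt]
  constructor
  · rintro ⟨a, b, c, d, ha, hb, hc, hd, hs, hx⟩
    have h0 := hx 0
    have h1 := hx 1
    have h2 := hx 2
    simp [pt3, bCtr, a₁, a₂, a₄] at h0 h1 h2
    refine ⟨?_, ?_, ?_, ?_⟩ <;> linarith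
  · rintro ⟨h0, h1, h2, h3⟩
    refine ⟨_, _, _, _, h0, h1, h2, h3, by ring, ?_⟩
    intro i
    fin_cases i <;> simp [pt3, bCtr, a₁, a₂, a₄] <;> ring

theorem memT3 (x : EuclideanSpace ℝ (Fin 3)) : x ∈ tet bCtr a₁ a₄ a₅ ↔
    0 ≤ (0) * x 0 + (2) * x 1 + (0) * x 2 + (0) ∧
    0 ≤ (0) * x 0 + (-1) * x 1 + (-1) * x 2 + (1) ∧
    0 ≤ (-1) * x 0 + (-1) * x 1 + (0) * x 2 + (1) ∧
    0 ≤ (1) * x 0 + (0) * x 1 + (1) * x 2 + (-1) := by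
  rw [mem_tet_pt]
  constructor
  · rintro ⟨a, b, c, d, ha, hb, hc, hd, hs, hx⟩
    have h0 := hx 0
    have h1 := hx 1
    have h2 := hx 2
    simp [pt3, bCtr, a₁, a₄, a₅] at h0 h1 h2
    refine ⟨?_, ?_, ?_, ?_⟩ <;> linarith
  · rintro ⟨h0, h1, h2, h3⟩
    refine ⟨_, _, _, _, h0, h1, h2, h3, by ring, ?_⟩
    intro i
    fin_cases i <;> simp [pt3, bCtr, a₁, a₄, a₅] <;> ring

theorem memT4 (x : EuclideanSpace ℝ (Fin 3)) : x ∈ tet bCtr a₁ a₃ a₅ ↔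
    0 ≤ (-2) * x 0 + (0) * x 1 + (0) * x 2 + (2) ∧
    0 ≤ (0) * x 0 + (-1) * x 1 + (-1) * x 2 + (1) ∧
    0 ≤ (1) * x 0 + (1) * x 1 + (0) * x 2 + (-1) ∧
    0 ≤ (1) * x 0 + (0) * x 1 + (1) * x 2 + (-1) := by
  rw [mem_tet_pt]
  constructor
  · rintro ⟨a, b, c, d, ha, hb, hc, hd, hs, hx⟩
    have h0 := hx 0
    have h1 := hx 1
    have h2 := hx 2
    simp [pt3, bCtr, a₁, a₃, a₅] at h0 h1 h2
    refine ⟨?_, ?_, ?_, ?_⟩ <;> linarith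
  · rintro ⟨h0, h1, h2, h3⟩
    refine ⟨_, _, _, _, h0, h1, h2, h3, by ring, ?_⟩
    intro i
    fin_cases i <;> simp [pt3, bCtr, a₁, a₃, a₅] <;> ring

theorem memT5 (x : EuclideanSpace ℝ (Fin 3)) : x ∈ tet bCtr a₃ a₅ a₆ ↔
    0 ≤ (-2) * x 0 + (-2) * x 1 + (-2) * x 2 + (4) ∧
    0 ≤ (1) * x 0 + (1) * x 1 + (0) * x 2 + (-1) ∧
    0 ≤ (1) * x 0 + (0) * x 1 + (1) * x 2 + (-1) ∧
    0 ≤ (0) * x 0 + (1) * x 1 + (1) * x 2 + (-1) := by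
  rw [mem_tet_pt]
  constructor
  · rintro ⟨a, b, c, d, ha, hb, hc, hd, hs, hx⟩
    have h0 := hx 0
    have h1 := hx 1
    have h2 := hx 2
    simp [pt3, bCtr, a₃, a₅, a₆] at h0 h1 h2
    refine ⟨?_, ?_, ?_, ?_⟩ <;> linarith
  · rintro ⟨h0, h1, h2, h3⟩
    refine ⟨_, _, _, _, h0, h1, h2, h3, by ring, ?_⟩
    intro i
    fin_cases i <;> simp [pt3, bCtr, a₃, a₅, a₆] <;> ring

theorem memT6 (x : EuclideanSpace ℝ (Fin 3)) : x ∈ tet bCtr a₂ a₃ a₆ ↔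
    0 ≤ (0) * x 0 + (-2) * x 1 + (0) * x 2 + (2) ∧
    0 ≤ (-1) * x 0 + (0) * x 1 + (-1) * x 2 + (1) ∧
    0 ≤ (1) * x 0 + (1) * x 1 + (0) * x 2 + (-1) ∧
    0 ≤ (0) * x 0 + (1) * x 1 + (1) * x 2 + (-1) := by
  rw [mem_tet_pt]
  constructor
  · rintro ⟨a, b, c, d, ha, hb, hc, hd, hs, hx⟩
    have h0 := hx 0
    have h1 := hx 1
    have h2 := hx 2
    simp [pt3, bCtr, a₂, a₃, a₆] at h0 h1 h2
    refine ⟨?_, ?_, ?_, ?_⟩ <;> linarith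
  · rintro ⟨h0, h1, h2, h3⟩
    refine ⟨_, _, _, _, h0, h1, h2, h3, by ring, ?_⟩
    intro i
    fin_cases i <;> simp [pt3, bCtr, a₂, a₃, a₆] <;> ring

theorem memT7 (x : EuclideanSpace ℝ (Fin 3)) : x ∈ tet bCtr a₂ a₄ a₆ ↔
    0 ≤ (2) * x 0 + (0) * x 1 + (0) * x 2 + (0) ∧
    0 ≤ (-1) * x 0 + (0) * x 1 + (-1) * x 2 + (1) ∧
    0 ≤ (-1) * x 0 + (-1) * x 1 + (0) * x 2 + (1) ∧
    0 ≤ (0) * x 0 + (1) * x 1 + (1) * x 2 + (-1) := by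
  rw [mem_tet_pt]
  constructor
  · rintro ⟨a, b, c, d, ha, hb, hc, hd, hs, hx⟩
    have h0 := hx 0
    have h1 := hx 1
    have h2 := hx 2
    simp [pt3, bCtr, a₂, a₄, a₆] at h0 h1 h2
    refine ⟨?_, ?_, ?_, ?_⟩ <;> linarith
  · rintro ⟨h0, h1, h2, h3⟩
    refine ⟨_, _, _, _, h0, h1, h2, h3, by ring, ?_⟩
    intro i
    fin_cases i <;> simp [pt3, bCtr, a₂, a₄, a₆] <;> ring

theorem memT8 (x : EuclideanSpace ℝ (Fin 3)) : x ∈ tet bCtr a₄ a₅ a₆ ↔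
    0 ≤ (0) * x 0 + (0) * x 1 + (-2) * x 2 + (2) ∧
    0 ≤ (-1) * x 0 + (-1) * x 1 + (0) * x 2 + (1) ∧
    0 ≤ (1) * x 0 + (0) * x 1 + (1) * x 2 + (-1) ∧
    0 ≤ (0) * x 0 + (1) * x 1 + (1) * x 2 + (-1) := by
  rw [mem_tet_pt]
  constructor
  · rintro ⟨a, b, c, d, ha, hb, hc, hd, hs, hx⟩
    have h0 := hx 0
    have h1 := hx 1
    have h2 := hx 2
    simp [pt3, bCtr, a₄, a₅, a₆] at h0 h1 h2
    refine ⟨?_, ?_, ?_, ?_⟩ <;> linarith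
  · rintro ⟨h0, h1, h2, h3⟩
    refine ⟨_, _, _, _, h0, h1, h2, h3, by ring, ?_⟩
    intro i
    fin_cases i <;> simp [pt3, bCtr, a₄, a₅, a₆] <;> ring

theorem memT9 (x : EuclideanSpace ℝ (Fin 3)) : x ∈ tet bCtr a₁ a₂ a₃ ↔
    0 ≤ (0) * x 0 + (0) * x 1 + (2) * x 2 + (0) ∧
    0 ≤ (0) * x 0 + (-1) * x 1 + (-1) * x 2 + (1) ∧
    0 ≤ (-1) * x 0 + (0) * x 1 + (-1) * x 2 + (1) ∧
    0 ≤ (1) * x 0 + (1) * x 1 + (0) * x 2 + (-1) := by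
  rw [mem_tet_pt]
  constructor
  · rintro ⟨a, b, c, d, ha, hb, hc, hd, hs, hx⟩
    have h0 := hx 0
    have h1 := hx 1
    have h2 := hx 2
    simp [pt3, bCtr, a₁, a₂, a₃] at h0 h1 h2
    refine ⟨?_, ?_, ?_, ?_⟩ <;> linarith
  · rintro ⟨h0, h1, h2, h3⟩
    refine ⟨_, _, _, _, h0, h1, h2, h3, by ring, ?_⟩
    intro i
    fin_cases i <;> simp [pt3, bCtr, a₁, a₂, a₃] <;> ring

theorem int_of {S : Set (EuclideanSpace ℝ (Fin 3))} {a b c d a' b' c' d' p q r s p' q' r' s' : ℝ}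
    (h : ∀ x, x ∈ S ↔ 0 ≤ a * x 0 + b * x 1 + c * x 2 + d ∧
      0 ≤ a' * x 0 + b' * x 1 + c' * x 2 + d' ∧ 0 ≤ p * x 0 + q * x 1 + r * x 2 + s ∧
      0 ≤ p' * x 0 + q' * x 1 + r' * x 2 + s')
    {x : EuclideanSpace ℝ (Fin 3)} (hx : x ∈ interior S)
    (h1 : 0 < a * a + b * b + c * c) (h2 : 0 < a' * a' + b' * b' + c' * c')
    (h3 : 0 < p * p + q * q + r * r) (h4 : 0 < p' * p' + q' * q' + r' * r') :
    0 < a * x 0 + b * x 1 + c * x 2 + d ∧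
      0 < a' * x 0 + b' * x 1 + c' * x 2 + d' ∧ 0 < p * x 0 + q * x 1 + r * x 2 + s ∧
      0 < p' * x 0 + q' * x 1 + r' * x 2 + s' :=
  ⟨strict_of_interior _ _ _ _ (fun y hy => ((h y).1 hy).1) h1 hx,
   strict_of_interior _ _ _ _ (fun y hy => ((h y).1 hy).2.1) h2 hx,
   strict_of_interior _ _ _ _ (fun y hy => ((h y).1 hy).2.2.1) h3 hx,
   strict_of_interior _ _ _ _ (fun y hy => ((h y).1 hy).2.2.2) h4 hx⟩

def strictB (k : Fin 10) (x y z : ℝ) : Prop :=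
  ![
    0 < (-1) * x + (-1) * y + (-1) * z + (1) ∧ 0 < (1) * x + (0) * y + (0) * z + (0) ∧ 0 < (0) * x + (1) * y + (0) * z + (0) ∧ 0 < (0) * x + (0) * y + (1) * z + (0),
    0 < (0) * x + (0) * y + (-1) * z + (1) ∧ 0 < (0) * x + (-1) * y + (0) * z + (1) ∧ 0 < (-1) * x + (0) * y + (0) * z + (1) ∧ 0 < (1) * x + (1) * y + (1) * z + (-2),
    0 < (2) * x + (2) * y + (2) * z + (-2) ∧ 0 < (0) * x + (-1) * y + (-1) * z + (1) ∧ 0 < (-1) * x + (0) * y + (-1) * z + (1) ∧ 0 < (-1) * x + (-1) * y + (0) * z + (1),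
    0 < (0) * x + (2) * y + (0) * z + (0) ∧ 0 < (0) * x + (-1) * y + (-1) * z + (1) ∧ 0 < (-1) * x + (-1) * y + (0) * z + (1) ∧ 0 < (1) * x + (0) * y + (1) * z + (-1),
    0 < (-2) * x + (0) * y + (0) * z + (2) ∧ 0 < (0) * x + (-1) * y + (-1) * z + (1) ∧ 0 < (1) * x + (1) * y + (0) * z + (-1) ∧ 0 < (1) * x + (0) * y + (1) * z + (-1),
    0 < (-2) * x + (-2) * y + (-2) * z + (4) ∧ 0 < (1) * x + (1) * y + (0) * z + (-1) ∧ 0 < (1) * x + (0) * y + (1) * z + (-1) ∧ 0 < (0) * x + (1) * y + (1) * z + (-1),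
    0 < (0) * x + (-2) * y + (0) * z + (2) ∧ 0 < (-1) * x + (0) * y + (-1) * z + (1) ∧ 0 < (1) * x + (1) * y + (0) * z + (-1) ∧ 0 < (0) * x + (1) * y + (1) * z + (-1),
    0 < (2) * x + (0) * y + (0) * z + (0) ∧ 0 < (-1) * x + (0) * y + (-1) * z + (1) ∧ 0 < (-1) * x + (-1) * y + (0) * z + (1) ∧ 0 < (0) * x + (1) * y + (1) * z + (-1),
    0 < (0) * x + (0) * y + (-2) * z + (2) ∧ 0 < (-1) * x + (-1) * y + (0) * z + (1) ∧ 0 < (1) * x + (0) * y + (1) * z + (-1) ∧ 0 < (0) * x + (1) * y + (1) * z + (-1),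
    0 < (0) * x + (0) * y + (2) * z + (0) ∧ 0 < (0) * x + (-1) * y + (-1) * z + (1) ∧ 0 < (-1) * x + (0) * y + (-1) * z + (1) ∧ 0 < (1) * x + (1) * y + (0) * z + (-1)] k

theorem strictB_of (k : Fin 10) (x : EuclideanSpace ℝ (Fin 3)) (hx : x ∈ interior (typeB₀ k)) :
    strictB k (x 0) (x 1) (x 2) := by
  fin_cases k
  · exact int_of memT0 hx (by norm_num) (by norm_num) (by norm_num) (by norm_num)
  · exact int_of memT1 hx (by norm_num) (by norm_num) (by norm_num) (by norm_num)
  · exact int_of memT2 hx (by norm_num) (by norm_num) (by norm_num) (by norm_num)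
  · exact int_of memT3 hx (by norm_num) (by norm_num) (by norm_num) (by norm_num)
  · exact int_of memT4 hx (by norm_num) (by norm_num) (by norm_num) (by norm_num)
  · exact int_of memT5 hx (by norm_num) (by norm_num) (by norm_num) (by norm_num)
  · exact int_of memT6 hx (by norm_num) (by norm_num) (by norm_num) (by norm_num)
  · exact int_of memT7 hx (by norm_num) (by norm_num) (by norm_num) (by norm_num)
  · exact int_of memT8 hx (by norm_num) (by norm_num) (by norm_num) (by norm_num)
  · exact int_of memT9 hx (by norm_num) (by norm_num) (by norm_num) (by norm_num)

theorem mem_union (x : EuclideanSpace ℝ (Fin 3)) (k : Fin 10) (h : x ∈ typeB₀ k) :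
    x ∈ ⋃ k, typeB₀ k := Set.mem_iUnion.2 ⟨k, h⟩

/-- The ten tetrahedra of the 'type B₀' triangulation of the unit cube,
`a₀a₁a₂a₄, a₃a₅a₆a₇, ba₁a₂a₄, ba₁a₄a₅, ba₁a₃a₅, ba₃a₅a₆, ba₂a₃a₆, ba₂a₄a₆, ba₄a₅a₆,
ba₁a₂a₃` (where `b = (1/2,1/2,1/2)` is the center), each have affinely independent vertex
sets, their union is `[0,1]³`, and they have pairwise disjoint interiors. -/
theorem typeB₀_decomposition_of_cube :
    AffineIndependent ℝ ![a₀, a₁, a₂, a₄] ∧ AffineIndependent ℝ ![a₃, a₅, a₆, a₇] ∧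
    AffineIndependent ℝ ![bCtr, a₁, a₂, a₄] ∧ AffineIndependent ℝ ![bCtr, a₁, a₄, a₅] ∧
    AffineIndependent ℝ ![bCtr, a₁, a₃, a₅] ∧ AffineIndependent ℝ ![bCtr, a₃, a₅, a₆] ∧
    AffineIndependent ℝ ![bCtr, a₂, a₃, a₆] ∧ AffineIndependent ℝ ![bCtr, a₂, a₄, a₆] ∧
    AffineIndependent ℝ ![bCtr, a₄, a₅, a₆] ∧ AffineIndependent ℝ ![bCtr, a₁, a₂, a₃] ∧
    (⋃ k, typeB₀ k) = unitCube ∧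
    (∀ k l : Fin 10, k ≠ l → interior (typeB₀ k) ∩ interior (typeB₀ l) = ∅) := by
  refine ⟨?_, ?_, ?_, ?_, ?_, ?_, ?_, ?_, ?_, ?_, ?_, ?_⟩
  iterate 10
    · apply affInd_of
      intro a b c d hs hx
      have h0 := hx 0
      have h1 := hx 1
      have h2 := hx 2
      simp [pt3, a₀, a₁, a₂, a₃, a₄, a₅, a₆, a₇, bCtr] at h0 h1 h2
      refine ⟨?_, ?_, ?_, ?_⟩ <;> linarith
  · ext x
    constructor
    · intro h
      obtain ⟨k, hk⟩ := Set.mem_iUnion.1 h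
      fin_cases k
      · obtain ⟨h0, h1, h2, h3⟩ := (memT0 x).1 hk
        intro i
        fin_cases i <;> constructor <;> simp <;> linarith
      · obtain ⟨h0, h1, h2, h3⟩ := (memT1 x).1 hk
        intro i
        fin_cases i <;> constructor <;> simp <;> linarith
      · obtain ⟨h0, h1, h2, h3⟩ := (memT2 x).1 hk
        intro i
        fin_cases i <;> constructor <;> simp <;> linarith
      · obtain ⟨h0, h1, h2, h3⟩ := (memT3 x).1 hk
        intro i
        fin_cases i <;> constructor <;> simp <;> linarith
      · obtain ⟨h0, h1, h2, h3⟩ := (memT4 x).1 hk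
        intro i
        fin_cases i <;> constructor <;> simp <;> linarith
      · obtain ⟨h0, h1, h2, h3⟩ := (memT5 x).1 hk
        intro i
        fin_cases i <;> constructor <;> simp <;> linarith
      · obtain ⟨h0, h1, h2, h3⟩ := (memT6 x).1 hk
        intro i
        fin_cases i <;> constructor <;> simp <;> linarith
      · obtain ⟨h0, h1, h2, h3⟩ := (memT7 x).1 hk
        intro i
        fin_cases i <;> constructor <;> simp <;> linarith
      · obtain ⟨h0, h1, h2, h3⟩ := (memT8 x).1 hk
        intro i
        fin_cases i <;> constructor <;> simp <;> linarith
      · obtain ⟨h0, h1, h2, h3⟩ := (memT9 x).1 hk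
        intro i
        fin_cases i <;> constructor <;> simp <;> linarith
    · intro h
      obtain ⟨l0, u0⟩ := h 0
      obtain ⟨l1, u1⟩ := h 1
      obtain ⟨l2, u2⟩ := h 2
      by_cases hlo : x 0 + x 1 + x 2 ≤ 1
      · exact mem_union x 0 ((memT0 x).2 (by refine ⟨?_, ?_, ?_, ?_⟩ <;> linarith))
      by_cases hhi : 2 ≤ x 0 + x 1 + x 2
      · exact mem_union x 1 ((memT1 x).2 (by refine ⟨?_, ?_, ?_, ?_⟩ <;> linarith))
      rcases le_total (x 0 + x 1) 1 with h3 | h3 <;>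
      rcases le_total (x 0 + x 2) 1 with h2 | h2 <;>
      rcases le_total (x 1 + x 2) 1 with h1 | h1
      · exact mem_union x 2 ((memT2 x).2 (by refine ⟨?_, ?_, ?_, ?_⟩ <;> linarith))
      · exact mem_union x 7 ((memT7 x).2 (by refine ⟨?_, ?_, ?_, ?_⟩ <;> linarith))
      · exact mem_union x 3 ((memT3 x).2 (by refine ⟨?_, ?_, ?_, ?_⟩ <;> linarith))
      · exact mem_union x 8 ((memT8 x).2 (by refine ⟨?_, ?_, ?_, ?_⟩ <;> linarith))
      · exact mem_union x 9 ((memT9 x).2 (by refine ⟨?_, ?_, ?_, ?_⟩ <;> linarith))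
      · exact mem_union x 6 ((memT6 x).2 (by refine ⟨?_, ?_, ?_, ?_⟩ <;> linarith))
      · exact mem_union x 4 ((memT4 x).2 (by refine ⟨?_, ?_, ?_, ?_⟩ <;> linarith))
      · exact mem_union x 5 ((memT5 x).2 (by refine ⟨?_, ?_, ?_, ?_⟩ <;> linarith))
  · intro k l hkl
    rw [Set.eq_empty_iff_forall_notMem]
    rintro x ⟨hk, hl⟩
    replace hk := strictB_of k x hk
    replace hl := strictB_of l x hl
    fin_cases k <;> fin_cases l <;> first
      | exact absurd rfl hkl
      | (obtain ⟨h0, h1, h2, h3⟩ := hk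
         obtain ⟨g0, g1, g2, g3⟩ := hl
         linarith)
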